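/- Let X be a positive real-valued random variable with continuous probability density function f that is strictly positive on (0,∞), cumulative distribution function F satisfying F(x) < 1 for all x > 0, hazard rate function r(t) = f(t)/(1 − F(t)), and quantile function Q. Suppose X is long-tailed and the limit lim_{t→∞} r(t) exists. Then lim_{p→1⁻} (1 − p)/f(Q(p)) = ∞. -/

import Mathlib

open MeasureTheory Filter Set Topology ProbabilityTheory

/-!
A hazard rate that stays above `c > 0` on `[x, x + y]` forces `P(X > x) ≥ (1 + c y) P(X > x + y)`.
A long tail makes the ratio of these two probabilities tend to `1`, so the hazard rate drops below
every `c > 0` at arbitrarily large times, and its limit can only be `0`. Since `F (Q p) = p`, the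
quotient `(1 - p) / f (Q p)` is the reciprocal of the hazard rate at `Q p`, and `Q p → ∞` as
`p → 1`.
-/

section Survival

variable {F f : ℝ → ℝ} {a c x y : ℝ}

theorem one_add_mul_mul_survival_le (hF : MonotoneOn F (Icc x (x + y)))
    (hf : IntervalIntegrable f volume x (x + y)) (hFf : F (x + y) - F x = ∫ u in x..(x + y), f u)
    (hy : 0 ≤ y) (hc : 0 ≤ c) (hcf : ∀ u ∈ Icc x (x + y), c * (1 - F u) ≤ f u) :
    (1 + c * y) * (1 - F (x + y)) ≤ 1 - F x := by
  have increment_ge : c * y * (1 - F (x + y)) ≤ F (x + y) - F x :=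
    calc c * y * (1 - F (x + y))
      _ = ∫ _ in x..(x + y), c * (1 - F (x + y)) := by
        rw [intervalIntegral.integral_const, add_sub_cancel_left, smul_eq_mul]
        ring
      _ ≤ ∫ u in x..(x + y), f u := by
        refine intervalIntegral.integral_mono_on (by linarith) (by simp) hf fun u hu => ?_
        refine le_trans ?_ (hcf u hu)
        gcongr
        exact hF hu (right_mem_Icc.2 (by linarith)) hu.2
      _ = F (x + y) - F x := hFf.symm
  linarith

theorem sub_eq_integral_of_eq_add_integral (hf : IntegrableOn f (Ioi a))
    (hFf : ∀ t, a ≤ t → F t = F a + ∫ u in a..t, f u) {s t : ℝ} (hs : a ≤ s) (ht : a ≤ t) :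
    F t - F s = ∫ u in s..t, f u := by
  have integrable_from (b : ℝ) (hb : a ≤ b) : IntervalIntegrable f volume a b :=
    (intervalIntegrable_iff_integrableOn_Ioc_of_le hb).2 (hf.mono_set Ioc_subset_Ioi_self)
  rw [hFf t ht, hFf s hs, add_sub_add_left_eq_sub]
  exact intervalIntegral.integral_interval_sub_left (integrable_from t ht)
    (integrable_from s hs)

theorem continuousOn_Ici_of_eq_add_integral (hf : IntegrableOn f (Ioi a))
    (hFf : ∀ t, a ≤ t → F t = F a + ∫ u in a..t, f u) : ContinuousOn F (Ici a) := by
  refine (continuousOn_const (c := F a + ∫ u in Ioi a, f u)).sub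
    hf.continuousOn_Ici_primitive_Ioi |>.congr fun t ht => ?_
  rw [hFf t ht, ← intervalIntegral.integral_Ioi_sub_Ioi hf ht, ← add_sub_assoc, Pi.sub_apply]

theorem frequently_hazard_lt (hF : Monotone F) (hF_lt : ∀ t, F t < 1)
    (hf : IntegrableOn f (Ioi a)) (hFf : ∀ t, a ≤ t → F t = F a + ∫ u in a..t, f u) (hy : 0 < y)
    (htail : Tendsto (fun x => (1 - F (x + y)) / (1 - F x)) atTop (𝓝 1)) (hc : 0 < c) :
    ∃ᶠ t in atTop, f t / (1 - F t) < c := by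
  intro hazard_ge
  obtain ⟨T, hT⟩ := eventually_atTop.1 hazard_ge
  have ratio_le : ∀ᶠ x in atTop, (1 - F (x + y)) / (1 - F x) ≤ (1 + c * y)⁻¹ := by
    filter_upwards [eventually_ge_atTop a, eventually_ge_atTop T] with x hax hTx
    have hxy : x ≤ x + y := by linarith
    have growth : (1 + c * y) * (1 - F (x + y)) ≤ 1 - F x := by
      refine one_add_mul_mul_survival_le (hF.monotoneOn _)
        ((intervalIntegrable_iff_integrableOn_Ioc_of_le hxy).2
          (hf.mono_set fun u hu => hax.trans_lt hu.1))
        (sub_eq_integral_of_eq_add_integral hf hFf hax (hax.trans hxy)) hy.le hc.le fun u hu => ?_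
      exact (le_div_iff₀ (sub_pos.2 (hF_lt u))).1 (not_lt.1 (hT u (hTx.trans hu.1)))
    rwa [div_le_iff₀ (sub_pos.2 (hF_lt x)), ← div_eq_inv_mul, le_div_iff₀' (by positivity)]
  have one_le : 1 ≤ (1 + c * y)⁻¹ := le_of_tendsto htail ratio_le
  have inv_lt : (1 + c * y)⁻¹ < 1 := inv_lt_one_of_one_lt₀ (by linarith [mul_pos hc hy])
  exact one_le.not_gt inv_lt

end Survival

theorem tendsto_zero_of_tendsto_ereal_of_frequently_lt {α : Type*} {l : Filter α} {g : α → ℝ}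
    {L : EReal} (hL : Tendsto (fun t => (g t : EReal)) l (𝓝 L)) (hg : ∀ᶠ t in l, 0 ≤ g t)
    (hsmall : ∀ c > 0, ∃ᶠ t in l, g t < c) : Tendsto g l (𝓝 0) := by
  obtain rfl | _ := l.eq_or_neBot
  · exact tendsto_bot
  have L_nonneg : 0 ≤ L := ge_of_tendsto hL (hg.mono fun t ht => EReal.coe_nonneg.2 ht)
  have L_le (c : ℝ) (hc : 0 < c) : L ≤ c :=
    le_of_tendsto_of_frequently hL ((hsmall c hc).mono fun t ht => EReal.coe_le_coe ht.le)
  have L_eq : L = 0 := by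
    refine L_nonneg.antisymm' (not_lt.1 fun L_pos => ?_)
    obtain ⟨c, c_pos, c_lt⟩ := EReal.lt_iff_exists_real_btwn.1 L_pos
    exact (L_le c (EReal.coe_pos.1 c_pos)).not_gt c_lt
  rw [L_eq] at hL
  exact EReal.tendsto_coe.1 hL

/-- The quantile function of a distribution function `F`. As `sInf` is real-valued, it is the
generalized inverse of `F` only at levels `p` for which `{t | p ≤ F t}` is nonempty and bounded
below; elsewhere it is `0`. -/
noncomputable def quantile (F : ℝ → ℝ) (p : ℝ) : ℝ :=
  sInf {t : ℝ | p ≤ F t}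

section Quantile

variable {F : ℝ → ℝ} {a l p : ℝ}

theorem apply_quantile (hF : Monotone F) (hcont : ContinuousOn F (Ici a))
    (hlim : Tendsto F atTop (𝓝 l)) (hp : p ∈ Ioo (F a) l) : F (quantile F p) = p := by
  obtain ⟨t, -, rfl⟩ : p ∈ F '' Ici a :=
    isPreconnected_Ici.intermediate_value_Ico self_mem_Ici
      (le_principal_iff.2 (Ici_mem_atTop a)) hcont hlim (Ioo_subset_Ico_self hp)
  have superlevel_subset : {s | F t ≤ F s} ⊆ Ici a := fun s hs =>
    (hF.reflect_lt (hp.1.trans_le hs)).le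
  have superlevel_bddBelow : BddBelow {s | F t ≤ F s} := bddBelow_Ici.mono superlevel_subset
  have superlevel_closed : IsClosed {s | F t ≤ F s} := by
    rw [← inter_eq_right.2 superlevel_subset]
    exact hcont.preimage_isClosed_of_isClosed isClosed_Ici isClosed_Ici
  have t_mem : t ∈ {s | F t ≤ F s} := mem_ofPred.2 le_rfl
  exact le_antisymm (hF (csInf_le superlevel_bddBelow t_mem))
    (superlevel_closed.csInf_mem ⟨t, t_mem⟩ superlevel_bddBelow)

theorem tendsto_quantile_atTop (hF : Monotone F) (hF_lt : ∀ t, F t < l)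
    (hlim : Tendsto F atTop (𝓝 l)) : Tendsto (quantile F) (𝓝[<] l) atTop := by
  refine tendsto_atTop.2 fun M => ?_
  filter_upwards [Ioo_mem_nhdsLT (hF_lt M)] with p hp
  exact le_csInf (hlim.eventually_const_le hp.2).exists
    fun t ht => (hF.reflect_lt (hp.1.trans_le ht)).le

end Quantile

section RandomVariable

variable {Ω : Type*} [MeasurableSpace Ω] {μ : Measure Ω} [IsProbabilityMeasure μ] {X : Ω → ℝ}

theorem cdf_map_apply (hX : AEMeasurable X μ) (t : ℝ) :
    cdf (μ.map X) t = μ.real {ω | X ω ≤ t} := by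
  have := Measure.isProbabilityMeasure_map hX
  rw [cdf_eq_real, map_measureReal_apply_of_aemeasurable hX measurableSet_Iic]
  rfl

theorem measureReal_lt_eq_one_sub (hX : AEMeasurable X μ) (t : ℝ) :
    μ.real {ω | t < X ω} = 1 - μ.real {ω | X ω ≤ t} := by
  rw [← probReal_compl_eq_one_sub₀ (nullMeasurableSet_le hX aemeasurable_const), compl_ofPred]
  simp only [not_le]

theorem stmt_16_general (hX : AEMeasurable X μ) {F f r Q : ℝ → ℝ} {a y : ℝ} {L : EReal}
    (hF : ∀ t, F t = μ.real {ω | X ω ≤ t}) (hf_int : IntegrableOn f (Ioi a))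
    (hpdf : ∀ t, a ≤ t → F t = F a + ∫ u in a..t, f u) (hf_pos : ∀ t > a, 0 < f t)
    (hFlt1 : ∀ x > a, F x < 1) (hr : ∀ t, r t = f t / (1 - F t))
    (hQ : ∀ p ∈ Ioo (0 : ℝ) 1, Q p = quantile F p) (hy : 0 < y)
    (hlt : Tendsto (fun x => μ.real {ω | x + y < X ω} / μ.real {ω | x < X ω}) atTop (𝓝 1))
    (hL : Tendsto (fun t => (r t : EReal)) atTop (𝓝 L)) :
    Tendsto (fun p => (1 - p) / f (Q p)) (𝓝[<] (1 : ℝ)) atTop := by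
  have F_eq_cdf : F = cdf (μ.map X) := funext fun t => (hF t).trans (cdf_map_apply hX t).symm
  have F_mono : Monotone F := F_eq_cdf ▸ monotone_cdf _
  have F_lim : Tendsto F atTop (𝓝 1) := F_eq_cdf ▸ tendsto_cdf_atTop _
  have F_lt (t : ℝ) : F t < 1 :=
    (F_mono (le_max_left t (a + 1))).trans_lt (hFlt1 _ (lt_max_of_lt_right (lt_add_one a)))
  have r_pos : ∀ᶠ t in atTop, 0 < r t := by
    filter_upwards [eventually_gt_atTop a] with t ht
    exact hr t ▸ div_pos (hf_pos t ht) (sub_pos.2 (F_lt t))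
  have r_lim : Tendsto r atTop (𝓝[>] 0) := by
    refine tendsto_nhdsWithin_iff.2 ⟨?_, r_pos⟩
    refine tendsto_zero_of_tendsto_ereal_of_frequently_lt hL (r_pos.mono fun _ => le_of_lt) ?_
    simp only [measureReal_lt_eq_one_sub hX, ← hF] at hlt
    simpa only [hr] using fun c hc => frequently_hazard_lt F_mono F_lt hf_int hpdf hy hlt hc
  have quantile_lim := tendsto_quantile_atTop F_mono F_lt F_lim
  refine (r_lim.comp quantile_lim).inv_tendsto_nhdsGT_zero.congr' ?_
  filter_upwards [Ioo_mem_nhdsLT zero_lt_one, Ioo_mem_nhdsLT (F_lt a)] with p hp01 hpa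
  have F_quantile : F (quantile F p) = p :=
    apply_quantile F_mono (continuousOn_Ici_of_eq_add_integral hf_int hpdf) F_lim hpa
  rw [Pi.inv_apply, Function.comp_apply, hr, F_quantile, inv_div, hQ p hp01]

end RandomVariable

theorem stmt_16 {Ω : Type*} [MeasureSpace Ω] [IsProbabilityMeasure (ℙ : Measure Ω)]
    (X : Ω → ℝ) (hX : Measurable X) (hXpos : ∀ ω, 0 < X ω)
    (F : ℝ → ℝ) (hF : ∀ t, F t = (ℙ {ω | X ω ≤ t}).toReal)
    (f : ℝ → ℝ) (hf_nonneg : ∀ t ∈ Set.Ioi (0:ℝ), 0 ≤ f t)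
    (hf_int : IntegrableOn f (Set.Ioi (0:ℝ)))
    (hpdf : ∀ t, 0 ≤ t → F t = ∫ u in (0:ℝ)..t, f u)
    (hf_cont : ContinuousOn f (Set.Ioi (0:ℝ)))
    (hf_pos : ∀ t ∈ Set.Ioi (0:ℝ), 0 < f t)
    (hFlt1 : ∀ x > (0:ℝ), F x < 1)
    (r : ℝ → ℝ) (hr : ∀ t, r t = f t / (1 - F t))
    (Q : ℝ → ℝ) (hQ : ∀ p ∈ Set.Ioo (0:ℝ) 1, Q p = sInf {t : ℝ | p ≤ F t})
    (hlt_pos : ∀ x > (0:ℝ), 0 < (ℙ {ω | x < X ω}).toReal)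
    (hlt : ∀ y > (0:ℝ), Tendsto (fun x => (ℙ {ω | x + y < X ω}).toReal / (ℙ {ω | x < X ω}).toReal)
      atTop (𝓝 1))
    (hr_lim : ∃ L : ℝ, Tendsto r atTop (𝓝 L)) :
    Tendsto (fun p => (1 - p) / f (Q p)) (𝓝[<] (1:ℝ)) atTop := by
  obtain ⟨L, hL⟩ := hr_lim
  exact stmt_16_general hX.aemeasurable hF hf_int
    (fun t ht => by simp [hpdf 0 le_rfl, hpdf t ht]) hf_pos hFlt1 hr hQ one_pos (hlt 1 one_pos)
    (EReal.tendsto_coe.2 hL)
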